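/- arXiv:1312.0101 — 2 statements merged into one kernel-verified Lean document; each statement's English description precedes it below -/
import Mathlib

section
/- Let Ω and ω be as in the context, let f : (0,1) → ℝ be continuous and bounded, and suppose there are constants δ₀ ∈ (0,1/2) and c > 0 such that |f(x)| ≥ c · sup_{(0,1)} |f| for all x ∈ [δ₀/2, δ₀]. Then for all 0 < ε ≤ δ₀/2: (sup_{(0,1)} |f|)² · ∫_0^1 ω dx ≤ C ∫_ε^{1−ε} ω f² dx, where C depends only on n, c and δ₀. -/
open MeasureTheory Set Filter Topology RealInnerProductSpace

noncomputable section

/-- The point `(x, y) ∈ ℝ × ℝ^m ≅ ℝ^{m+1}`. -/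
def mkPt (m : ℕ) (x : ℝ) (y : EuclideanSpace ℝ (Fin m)) : EuclideanSpace ℝ (Fin (m+1)) :=
  (EuclideanSpace.equiv (Fin (m+1)) ℝ).symm (Fin.cons x ((EuclideanSpace.equiv (Fin m) ℝ) y))

/-- The cross-section `Ω(s) = {y : (s, y) ∈ Ω}`. -/
def cross {m : ℕ} (Ω : Set (EuclideanSpace ℝ (Fin (m+1)))) (s : ℝ) :
    Set (EuclideanSpace ℝ (Fin m)) := {y | mkPt m s y ∈ Ω}

/-- `ω(s)`: the (n-1)-dimensional volume of the cross-section `Ω(s)`. -/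
def ωvol {m : ℕ} (Ω : Set (EuclideanSpace ℝ (Fin (m+1)))) (s : ℝ) : ℝ :=
  (volume (cross Ω s)).toReal

/-- The Laplacian, as the sum of the pure second derivatives along the standard basis. -/
def lap {k : ℕ} (u : EuclideanSpace ℝ (Fin k) → ℝ) (p : EuclideanSpace ℝ (Fin k)) : ℝ :=
  ∑ i, fderiv ℝ (fun q => fderiv ℝ u q (EuclideanSpace.single i 1)) p (EuclideanSpace.single i 1)

/-- The cross-sectional average `ū(x)` of `u`. -/
def ubarFn {m : ℕ} (Ω : Set (EuclideanSpace ℝ (Fin (m+1))))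
    (u : EuclideanSpace ℝ (Fin (m+1)) → ℝ) (x : ℝ) : ℝ :=
  (∫ y in cross Ω x, u (mkPt m x y)) / ωvol Ω x

lemma mkPt_comb (m : ℕ) (a b x x' : ℝ) (y y' : EuclideanSpace ℝ (Fin m)) :
    a • mkPt m x y + b • mkPt m x' y' = mkPt m (a * x + b * x') (a • y + b • y') := by
  ext i
  refine Fin.cases ?_ (fun j => ?_) i <;> simp [mkPt]

lemma mkPt_continuous (m : ℕ) :
    Continuous (fun p : ℝ × EuclideanSpace ℝ (Fin m) => mkPt m p.1 p.2) := by
  unfold mkPt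
  refine (EuclideanSpace.equiv (Fin (m+1)) ℝ).symm.continuous.comp ?_
  refine continuous_pi fun i => ?_
  refine Fin.cases ?_ (fun j => ?_) i
  · simpa using continuous_fst
  · simp only [Fin.cons_succ]
    exact (continuous_apply j).comp
      ((EuclideanSpace.equiv (Fin m) ℝ).continuous.comp continuous_snd)

lemma norm_le_mkPt (m : ℕ) (x : ℝ) (y : EuclideanSpace ℝ (Fin m)) :
    ‖y‖ ≤ ‖mkPt m x y‖ := by
  rw [EuclideanSpace.norm_eq, EuclideanSpace.norm_eq]
  apply Real.sqrt_le_sqrt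
  rw [Fin.sum_univ_succ]
  simp [mkPt, sq_nonneg]

lemma cross_finite {m : ℕ} {Ω : Set (EuclideanSpace ℝ (Fin (m+1)))}
    (hb : Bornology.IsBounded Ω) (s : ℝ) : volume (cross Ω s) ≠ ⊤ := by
  obtain ⟨R, hR⟩ := hb.exists_norm_le
  have : Bornology.IsBounded (cross Ω s) :=
    isBounded_iff_forall_norm_le.2 ⟨R, fun y hy => (norm_le_mkPt m s y).trans (hR _ hy)⟩
  exact this.measure_lt_top.ne

lemma ωvol_measurable {m : ℕ} {Ω : Set (EuclideanSpace ℝ (Fin (m+1)))}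
    (ho : IsOpen Ω) : Measurable (ωvol Ω) := by
  have h : MeasurableSet ((fun p : ℝ × EuclideanSpace ℝ (Fin m) => mkPt m p.1 p.2) ⁻¹' Ω) :=
    (ho.preimage (mkPt_continuous m)).measurableSet
  exact (measurable_measure_prodMk_left (ν := (volume : Measure (EuclideanSpace ℝ (Fin m))))
    h).ennreal_toReal

lemma ωvol_compare {m : ℕ} {Ω : Set (EuclideanSpace ℝ (Fin (m+1)))}
    (hcv : Convex ℝ Ω) (hb : Bornology.IsBounded Ω)
    (hne : ∀ s ∈ Ioo (0:ℝ) 1, (cross Ω s).Nonempty)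
    {δ₀ : ℝ} (hδ₀ : 0 < δ₀) (hδ₀' : δ₀ < 1/2) {s t : ℝ} (hs : s ∈ Ioo (0:ℝ) 1)
    (ht : t ∈ Icc (δ₀/2) δ₀) :
    (δ₀/4)^m * ωvol Ω s ≤ ωvol Ω t := by
  obtain ⟨hs0, hs1⟩ := hs
  obtain ⟨ht0, ht1⟩ := ht
  have hl : 0 < 1 - δ₀/4 := by linarith
  obtain ⟨p, hp⟩ := hne ((t - δ₀/4 * s) / (1 - δ₀/4))
    ⟨div_pos (by nlinarith) hl, by rw [div_lt_one hl]; nlinarith⟩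
  have hsub : AffineMap.homothety p (δ₀/4) '' cross Ω s ⊆ cross Ω t := by
    rintro _ ⟨y, hy, rfl⟩
    have h := hcv hp hy hl.le (by linarith : (0:ℝ) ≤ δ₀/4) (by ring)
    rw [mkPt_comb] at h
    have e1 : (1 - δ₀/4) * ((t - δ₀/4 * s) / (1 - δ₀/4)) + δ₀/4 * s = t := by
      rw [mul_div_cancel₀ _ hl.ne']; ring
    rw [e1] at h
    have e2 : AffineMap.homothety p (δ₀/4) y = (1 - δ₀/4) • p + (δ₀/4) • y := by
      simp only [AffineMap.homothety_apply, vsub_eq_sub, vadd_eq_add]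
      module
    rw [e2]
    exact h
  have h := measure_mono (μ := volume) hsub
  rw [Measure.addHaar_image_homothety] at h
  have h2 := ENNReal.toReal_mono (cross_finite hb t) h
  rw [ENNReal.toReal_mul, ENNReal.toReal_ofReal (abs_nonneg _), finrank_euclideanSpace_fin,
    abs_of_nonneg (by positivity)] at h2
  exact h2

/-- If a bounded continuous `f` on `(0,1)` is at least `c·sup|f|` on a fixed
middle-of-the-left interval `[δ₀/2, δ₀]`, then `(sup|f|)² ∫_0^1 ω ≤ C ∫_ε^{1-ε} ω f²`. -/
theorem sup_sq_times_mass_le_weighted_L2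
    (m : ℕ) (hm : 1 ≤ m) (c δ₀ : ℝ) (hc : 0 < c) (hδ₀ : 0 < δ₀) (hδ₀' : δ₀ < 1/2) :
    ∃ C > (0:ℝ), ∀ (Ω : Set (EuclideanSpace ℝ (Fin (m+1)))) (f : ℝ → ℝ),
      IsOpen Ω → Convex ℝ Ω → Bornology.IsBounded Ω →
      -- Ω ⊆ (0,1) × ℝ^{n-1}
      (∀ x y, mkPt m x y ∈ Ω → x ∈ Ioo (0:ℝ) 1) →
      -- nonempty cross-sections
      (∀ s ∈ Ioo (0:ℝ) 1, (cross Ω s).Nonempty) →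
      ContinuousOn f (Ioo 0 1) →
      (∃ M : ℝ, ∀ x ∈ Ioo (0:ℝ) 1, |f x| ≤ M) →
      (∀ x ∈ Icc (δ₀/2) δ₀, c * sSup ((fun t => |f t|) '' Ioo (0:ℝ) 1) ≤ |f x|) →
      ∀ ε : ℝ, 0 < ε → ε ≤ δ₀/2 →
        (sSup ((fun t => |f t|) '' Ioo (0:ℝ) 1)) ^ 2 * (∫ x in (0:ℝ)..1, ωvol Ω x)
          ≤ C * ∫ x in ε..(1-ε), ωvol Ω x * (f x) ^ 2 := by
  have hL : 0 < (δ₀/4)^m := by positivity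
  set L := (δ₀/4)^m with hLd
  refine ⟨2 / (L^2 * δ₀ * c^2), by positivity, ?_⟩
  intro Ω f ho hcv hb hsub hne hf hM hfc ε hε hε'
  set S := sSup ((fun t => |f t|) '' Ioo (0:ℝ) 1) with hS
  have hS0 : 0 ≤ S := Real.sSup_nonneg (by rintro _ ⟨t, _, rfl⟩; exact abs_nonneg _)
  obtain ⟨M, hM⟩ := hM
  have hcmp : ∀ s ∈ Ioo (0:ℝ) 1, ∀ t ∈ Icc (δ₀/2) δ₀, L * ωvol Ω s ≤ ωvol Ω t :=
    fun s hs t ht => ωvol_compare hcv hb hne hδ₀ hδ₀' hs ht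
  have hω0 : ∀ s, 0 ≤ ωvol Ω s := fun s => ENNReal.toReal_nonneg
  set W := ωvol Ω δ₀ with hW
  have hW0 : 0 ≤ W := hω0 _
  have hδmem : δ₀ ∈ Ioo (0:ℝ) 1 := ⟨hδ₀, by linarith⟩
  have hup : ∀ s ∈ Ioo (0:ℝ) 1, ωvol Ω s ≤ W / L := fun s hs => by
    rw [le_div_iff₀ hL, mul_comm]
    exact hcmp s hs δ₀ ⟨by linarith, le_rfl⟩
  have hωm := ωvol_measurable ho
  -- upper bound on the left
  have h1 : ∫ x in (0:ℝ)..1, ωvol Ω x ≤ W / L := by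
    rw [intervalIntegral.integral_of_le zero_le_one, integral_Ioc_eq_integral_Ioo]
    have h := norm_setIntegral_le_of_norm_le_const (μ := volume) (s := Ioo (0:ℝ) 1)
      (f := ωvol Ω) (C := W / L) (by simp)
      (fun x hx => by rw [Real.norm_of_nonneg (hω0 x)]; exact hup x hx)
    have := (le_abs_self _).trans h
    simpa using this
  -- integrability
  have hsubI : Ioc ε (1-ε) ⊆ Ioo (0:ℝ) 1 := fun x hx => ⟨hε.trans hx.1, by linarith [hx.2]⟩
  have hint : IntegrableOn (fun x => ωvol Ω x * (f x)^2) (Ioc ε (1-ε)) := by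
    refine Integrable.of_bound ?_ (W / L * M^2) ?_
    · exact hωm.aestronglyMeasurable.mul
        (((hf.mono hsubI).pow 2).aestronglyMeasurable measurableSet_Ioc)
    · refine (ae_restrict_iff' measurableSet_Ioc).2 (ae_of_all _ fun x hx => ?_)
      have hx' := hsubI hx
      rw [Real.norm_of_nonneg (mul_nonneg (hω0 x) (sq_nonneg _))]
      have : f x ^ 2 ≤ M^2 := by
        rw [← sq_abs]; exact pow_le_pow_left₀ (abs_nonneg _) (hM x hx') 2
      exact mul_le_mul (hup x hx') this (sq_nonneg _) (div_nonneg hW0 hL.le)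
  have hsubJ : Ioc (δ₀/2) δ₀ ⊆ Ioc ε (1-ε) :=
    fun x hx => ⟨lt_of_le_of_lt hε' hx.1, by linarith [hx.2]⟩
  -- lower bound on the right
  have h2 : δ₀/2 * (L * W * (c*S)^2) ≤ ∫ x in ε..(1-ε), ωvol Ω x * (f x) ^ 2 := by
    rw [intervalIntegral.integral_of_le (by linarith)]
    calc δ₀/2 * (L * W * (c*S)^2) = ∫ x in Ioc (δ₀/2) δ₀, L * W * (c*S)^2 := by
          rw [setIntegral_const]
          simp only [Measure.real, Real.volume_Ioc, smul_eq_mul]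
          rw [ENNReal.toReal_ofReal (by linarith)]; ring
      _ ≤ ∫ x in Ioc (δ₀/2) δ₀, ωvol Ω x * (f x) ^ 2 := by
          refine setIntegral_mono_on (integrableOn_const (by simp)) (hint.mono_set hsubJ) measurableSet_Ioc ?_
          intro x hx
          have hx' : x ∈ Icc (δ₀/2) δ₀ := ⟨hx.1.le, hx.2⟩
          have : (c*S)^2 ≤ f x ^ 2 := by
            rw [← sq_abs (f x)]
            exact pow_le_pow_left₀ (by positivity) (hfc x hx') 2
          exact mul_le_mul (hcmp δ₀ hδmem x hx') this (sq_nonneg _) (hω0 x)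
      _ ≤ _ := setIntegral_mono_set hint
          (ae_of_all _ fun x => mul_nonneg (hω0 x) (sq_nonneg _)) hsubJ.eventuallyLE
  calc S^2 * (∫ x in (0:ℝ)..1, ωvol Ω x) ≤ S^2 * (W / L) :=
        mul_le_mul_of_nonneg_left h1 (sq_nonneg _)
    _ = 2 / (L^2 * δ₀ * c^2) * (δ₀/2 * (L * W * (c*S)^2)) := by field_simp
    _ ≤ _ := mul_le_mul_of_nonneg_left h2 (by positivity)
end
end

section
/- Let Ω, ω, u, λ, ū be as in the context. Define ū₁(x) = ū(ε) for x < ε, ū₁(x) = ū(x) for ε ≤ x ≤ 1−ε, ū₁(x) = ū(1−ε) for x > 1−ε; set ū₁⁰ = (∫_0^1 ω ū₁ dx)/(∫_0^1 ω dx) and ū₁^⊥ = ū₁ − ū₁⁰. Then ∫_0^1 ω (ū₁^⊥)² dx ≥ (1 − Cε) ∫_0^1 ω ū² dx, with C depending only on n. -/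
open MeasureTheory Set Filter Topology RealInnerProductSpace

noncomputable section

/-- The measurable equivalence `(x, y) ↦ mkPt m x y`. -/
def mkEquiv (m : ℕ) : (ℝ × EuclideanSpace ℝ (Fin m)) ≃ᵐ EuclideanSpace ℝ (Fin (m+1)) :=
  ((MeasurableEquiv.prodCongr (MeasurableEquiv.refl ℝ)
    (MeasurableEquiv.toLp 2 (Fin m → ℝ)).symm).trans
    (MeasurableEquiv.piFinSuccAbove (fun _ => ℝ) 0).symm).trans
    (MeasurableEquiv.toLp 2 (Fin (m+1) → ℝ))

lemma mkEquiv_apply (m : ℕ) (z : ℝ × EuclideanSpace ℝ (Fin m)) :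
    mkEquiv m z = mkPt m z.1 z.2 := by
  ext i
  refine Fin.cases ?_ (fun j => ?_) i <;>
    simp [mkEquiv, mkPt, MeasurableEquiv.piFinSuccAbove] <;> rfl

lemma mkEquiv_mp (m : ℕ) : MeasurePreserving (mkEquiv m) volume volume := by
  have h1 : MeasurePreserving (MeasurableEquiv.prodCongr (MeasurableEquiv.refl ℝ)
    (MeasurableEquiv.toLp 2 (Fin m → ℝ)).symm) volume volume :=
    (MeasurePreserving.id volume).prod
      (EuclideanSpace.volume_preserving_symm_measurableEquiv_toLp (Fin m))
  have h2 := (volume_preserving_piFinSuccAbove (fun _ : Fin (m+1) => ℝ) 0).symm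
  have h3 := (EuclideanSpace.volume_preserving_symm_measurableEquiv_toLp (Fin (m+1))).symm
  exact (h3.comp h2).comp h1

lemma mkPt_zero (m : ℕ) (x : ℝ) (y : EuclideanSpace ℝ (Fin m)) : mkPt m x y 0 = x := by
  simp [mkPt]

lemma mkPt_succ (m : ℕ) (x : ℝ) (y : EuclideanSpace ℝ (Fin m)) (i : Fin m) :
    mkPt m x y i.succ = y i := by
  simp [mkPt]

lemma mkPt_surj (m : ℕ) (p : EuclideanSpace ℝ (Fin (m+1))) : ∃ y, p = mkPt m (p 0) y := by
  refine ⟨WithLp.toLp 2 (fun i => p i.succ), ?_⟩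
  ext i
  refine Fin.cases ?_ (fun j => ?_) i
  · rw [mkPt_zero]
  · rw [mkPt_succ]

lemma mkPt_dist (m : ℕ) (x x' : ℝ) (y y' : EuclideanSpace ℝ (Fin m)) :
    ‖mkPt m x y - mkPt m x' y'‖ ≤ |x - x'| + ‖y - y'‖ := by
  have h : ‖mkPt m x y - mkPt m x' y'‖ ^ 2 = |x - x'| ^ 2 + ‖y - y'‖ ^ 2 := by
    rw [EuclideanSpace.norm_sq_eq, EuclideanSpace.norm_sq_eq, Fin.sum_univ_succ]
    simp [mkPt_zero, mkPt_succ]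
  refine le_of_sq_le_sq ?_ (by positivity)
  rw [h]
  nlinarith [mul_nonneg (abs_nonneg (x - x')) (norm_nonneg (y - y'))]

lemma mkPt_cont (m : ℕ) (x : ℝ) : Continuous (mkPt m x) := by
  unfold mkPt
  apply (EuclideanSpace.equiv (Fin (m+1)) ℝ).symm.continuous.comp
  refine continuous_pi fun i => ?_
  refine Fin.cases ?_ (fun j => ?_) i
  · simpa using continuous_const
  · simp only [Fin.cons_succ]
    exact (continuous_apply j).comp (EuclideanSpace.equiv (Fin m) ℝ).continuous

lemma cross_open {m : ℕ} {Ω : Set (EuclideanSpace ℝ (Fin (m+1)))} (h : IsOpen Ω) (s : ℝ) :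
    IsOpen (cross Ω s) := h.preimage (mkPt_cont m s)

lemma cross_scale {m : ℕ} {Ω : Set (EuclideanSpace ℝ (Fin (m+1)))} (h : Convex ℝ Ω)
    {s x' x t : ℝ} (hB : volume (cross Ω x) ≠ ⊤) (ht0 : 0 ≤ t) (ht1 : t ≤ 1)
    (hx : x = t * s + (1 - t) * x')
    (hne : (cross Ω x').Nonempty) : t ^ m * ωvol Ω s ≤ ωvol Ω x := by
  obtain ⟨y', hy'⟩ := hne
  have hsub : AffineMap.homothety y' t '' (cross Ω s) ⊆ cross Ω x := by
    rintro _ ⟨y, hy, rfl⟩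
    have := h hy hy' ht0 (by linarith : (0:ℝ) ≤ 1 - t) (by ring)
    rw [mkPt_comb, ← hx] at this
    have e : AffineMap.homothety y' t y = t • y + (1 - t) • y' := by
      simp [AffineMap.homothety_apply, smul_sub, sub_smul]; abel
    rw [e]; exact this
  have h1 := measure_mono (μ := volume) hsub
  rw [Measure.addHaar_image_homothety] at h1
  have h2 := ENNReal.toReal_mono hB h1
  rw [ENNReal.toReal_mul, ENNReal.toReal_ofReal (abs_nonneg _)] at h2
  simpa [abs_of_nonneg ht0, ωvol] using h2

lemma osc {m : ℕ} {Ω : Set (EuclideanSpace ℝ (Fin (m+1)))} (hop : IsOpen Ω) (h : Convex ℝ Ω)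
    {u : EuclideanSpace ℝ (Fin (m+1)) → ℝ} {ε S C₀ α β G : ℝ}
    (hC₀ : 0 < C₀) (hS : 0 ≤ S)
    (hsub : ∀ x y, mkPt m x y ∈ Ω →
        x ∈ Ioo (0:ℝ) 1 ∧ y ∈ Metric.ball (0 : EuclideanSpace ℝ (Fin m)) ε)
    (hu : ContDiffOn ℝ (⊤:ℕ∞) u (closure Ω))
    (hg : ∀ p ∈ Ω, ‖gradient u p‖ ≤ C₀ * max (min (p 0) (1 - p 0)) ε * S)
    (hG0 : 0 ≤ G)
    (hG : ∀ x ∈ Icc α β, max (min x (1 - x)) ε ≤ G)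
    {x x' : ℝ} {y y' : EuclideanSpace ℝ (Fin m)} (hx : x ∈ Icc α β) (hx' : x' ∈ Icc α β)
    (hy : y ∈ cross Ω x) (hy' : y' ∈ cross Ω x') :
    |u (mkPt m x y) - u (mkPt m x' y')| ≤ C₀ * G * S * (β - α + 2 * ε) := by
  have hconv : Convex ℝ (Ω ∩ {p | p 0 ∈ Icc α β}) := by
    refine h.inter ?_
    have : Convex ℝ ((EuclideanSpace.proj (𝕜 := ℝ) (0 : Fin (m+1))) ⁻¹' (Icc α β)) :=
      (convex_Icc α β).linear_preimage (EuclideanSpace.proj (𝕜 := ℝ) (0 : Fin (m+1))).toLinearMap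
    exact this
  have hmv := hconv.norm_image_sub_le_of_norm_fderiv_le (𝕜 := ℝ) (f := u) (C := C₀ * G * S)
    (x := mkPt m x' y') (y := mkPt m x y) ?_ ?_
    ⟨hy', by simpa [mkPt_zero] using hx'⟩ ⟨hy, by simpa [mkPt_zero] using hx⟩
  · rw [Real.norm_eq_abs] at hmv
    refine hmv.trans ?_
    refine mul_le_mul_of_nonneg_left ?_ (by positivity)
    refine (mkPt_dist m x x' y y').trans ?_
    have a1 : |x - x'| ≤ β - α := by
      rw [abs_le]; constructor <;> linarith [hx.1, hx.2, hx'.1, hx'.2]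
    have b1 := (hsub _ _ hy).2
    have b2 := (hsub _ _ hy').2
    rw [mem_ball_zero_iff] at b1 b2
    have := norm_sub_le y y'
    linarith
  · rintro p ⟨hp, -⟩
    have : closure Ω ∈ 𝓝 p := mem_of_superset (hop.mem_nhds hp) subset_closure
    exact ((hu p (subset_closure hp)).contDiffAt this).differentiableAt (by simp)
  · rintro p ⟨hp, hp2⟩
    have e : ‖gradient u p‖ = ‖fderiv ℝ u p‖ := by
      unfold gradient
      exact LinearIsometryEquiv.norm_map _ _
    rw [← e]
    refine (hg p hp).trans ?_
    have := hG _ hp2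
    gcongr

lemma avg_bd {m : ℕ} {Ω : Set (EuclideanSpace ℝ (Fin (m+1)))} (hop : IsOpen Ω)
    {u : EuclideanSpace ℝ (Fin (m+1)) → ℝ} {x A B : ℝ}
    (hfin : volume (cross Ω x) ≠ ⊤) (hne : (cross Ω x).Nonempty)
    (hu : ContinuousOn u Ω)
    (hA : ∀ y ∈ cross Ω x, A ≤ u (mkPt m x y)) (hB : ∀ y ∈ cross Ω x, u (mkPt m x y) ≤ B) :
    A ≤ ubarFn Ω u x ∧ ubarFn Ω u x ≤ B := by
  have hm := (cross_open hop x).measurableSet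
  have hpos : 0 < ωvol Ω x := ENNReal.toReal_pos
    ((cross_open hop x).measure_pos volume hne).ne' hfin
  have hc : ContinuousOn (fun y => u (mkPt m x y)) (cross Ω x) :=
    hu.comp (mkPt_cont m x).continuousOn (fun y hy => hy)
  have hint : IntegrableOn (fun y => u (mkPt m x y)) (cross Ω x) := by
    refine IntegrableOn.of_bound (C := max |A| |B|) hfin.lt_top
      (hc.aestronglyMeasurable hm) ?_
    refine (ae_restrict_iff' hm).2 (Eventually.of_forall fun y hy => ?_)
    rw [Real.norm_eq_abs]
    exact abs_le_max_abs_abs (hA y hy) (hB y hy)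
  have c : ∀ K : ℝ, ∫ y in cross Ω x, K = K * ωvol Ω x := by
    intro K; simp [ωvol, Measure.real, mul_comm]
  unfold ubarFn
  rw [le_div_iff₀ hpos, div_le_iff₀ hpos, ← c, ← c]
  exact ⟨setIntegral_mono_on (integrableOn_const hfin) hint hm hA,
    setIntegral_mono_on hint (integrableOn_const hfin) hm hB⟩

lemma avg_diff {m : ℕ} {Ω : Set (EuclideanSpace ℝ (Fin (m+1)))} (hop : IsOpen Ω)
    {u : EuclideanSpace ℝ (Fin (m+1)) → ℝ} {x x' δ : ℝ}
    (hfin : volume (cross Ω x) ≠ ⊤) (hne : (cross Ω x).Nonempty)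
    (hfin' : volume (cross Ω x') ≠ ⊤) (hne' : (cross Ω x').Nonempty)
    (hu : ContinuousOn u Ω)
    (hd : ∀ y ∈ cross Ω x, ∀ y' ∈ cross Ω x', |u (mkPt m x y) - u (mkPt m x' y')| ≤ δ) :
    |ubarFn Ω u x - ubarFn Ω u x'| ≤ δ := by
  have h1 : ∀ y' ∈ cross Ω x', u (mkPt m x' y') - δ ≤ ubarFn Ω u x ∧
      ubarFn Ω u x ≤ u (mkPt m x' y') + δ := fun y' hy' =>
    avg_bd hop hfin hne hu (fun y hy => by linarith [(abs_le.1 (hd y hy y' hy')).1])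
      (fun y hy => by linarith [(abs_le.1 (hd y hy y' hy')).2])
  have h2 := avg_bd (A := ubarFn Ω u x - δ) (B := ubarFn Ω u x + δ) hop hfin' hne' hu
    (fun y' hy' => by linarith [(h1 y' hy').2]) (fun y' hy' => by linarith [(h1 y' hy').1])
  rw [abs_le]; constructor <;> linarith [h2.1, h2.2]

lemma omega_meas {m : ℕ} {Ω : Set (EuclideanSpace ℝ (Fin (m+1)))} (hop : IsOpen Ω) :
    Measurable (ωvol Ω) := by
  have h : MeasurableSet ((mkEquiv m) ⁻¹' Ω) := (mkEquiv m).measurable hop.measurableSet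
  have := (measurable_measure_prodMk_left (ν := (volume : Measure (EuclideanSpace ℝ (Fin m)))) h).ennreal_toReal
  have e : ωvol Ω = fun x => (volume (Prod.mk x ⁻¹' ((mkEquiv m) ⁻¹' Ω))).toReal := by
    funext s
    unfold ωvol
    congr 2
    ext y
    simp [cross, mkEquiv_apply]
  rw [e]; exact this

lemma inner_eq {m : ℕ} {Ω : Set (EuclideanSpace ℝ (Fin (m+1)))} (hop : IsOpen Ω)
    (u : EuclideanSpace ℝ (Fin (m+1)) → ℝ) (x : ℝ) :
    ∫ y in cross Ω x, u (mkPt m x y) = ∫ y, (Ω.indicator u) (mkEquiv m (x, y)) := by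
  rw [← integral_indicator (cross_open hop x).measurableSet]
  refine integral_congr_ae (Eventually.of_forall fun y => ?_)
  simp only [mkEquiv_apply]
  by_cases h : y ∈ cross Ω x
  · rw [indicator_of_mem h, indicator_of_mem (show mkPt m x y ∈ Ω from h)]
  · rw [indicator_of_notMem h, indicator_of_notMem (show mkPt m x y ∉ Ω from h)]

lemma ubar_meas {m : ℕ} {Ω : Set (EuclideanSpace ℝ (Fin (m+1)))} (hop : IsOpen Ω)
    {u : EuclideanSpace ℝ (Fin (m+1)) → ℝ} (hu : ContinuousOn u Ω) :
    Measurable (ubarFn Ω u) := by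
  unfold ubarFn
  refine Measurable.div ?_ (omega_meas hop)
  simp_rw [inner_eq hop u]
  have h0 : Measurable (Ω.indicator u) := by
    classical
    have := hu.measurable_piecewise (g := 0) continuousOn_const hop.measurableSet
    rw [← piecewise_eq_indicator]
    convert this
  exact ((h0.comp (mkEquiv m).measurable).stronglyMeasurable.integral_prod_right').measurable

lemma fub {m : ℕ} {Ω : Set (EuclideanSpace ℝ (Fin (m+1)))} (hop : IsOpen Ω)
    {u : EuclideanSpace ℝ (Fin (m+1)) → ℝ} (hu : IntegrableOn u Ω)
    (hfin : ∀ x, volume (cross Ω x) ≠ ⊤)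
    (hemp : ∀ x, x ∉ Ioo (0:ℝ) 1 → cross Ω x = ∅) :
    ∫ x in (0:ℝ)..1, ωvol Ω x * ubarFn Ω u x = ∫ p in Ω, u p := by
  have e : ∀ x, ωvol Ω x * ubarFn Ω u x = ∫ y, (Ω.indicator u) (mkEquiv m (x, y)) := by
    intro x
    rw [← inner_eq hop]
    unfold ubarFn
    by_cases h : ωvol Ω x = 0
    · have : volume (cross Ω x) = 0 := by
        rcases (ENNReal.toReal_eq_zero_iff _).1 h with h | h
        · exact h
        · exact absurd h (hfin x)
      rw [h, zero_mul, setIntegral_measure_zero _ this]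
    · field_simp
  rw [← integral_indicator hop.measurableSet, ← (mkEquiv_mp m).integral_comp']
  have hi : Integrable (fun z => (Ω.indicator u) (mkEquiv m z)) :=
    ((mkEquiv_mp m).integrable_comp_emb (mkEquiv m).measurableEmbedding).2
      ((integrable_indicator_iff hop.measurableSet).2 hu)
  rw [Measure.volume_eq_prod, integral_prod _ hi, intervalIntegral.integral_of_le zero_le_one]
  simp_rw [← e]
  refine setIntegral_eq_integral_of_forall_compl_eq_zero fun x hx => ?_
  have : cross Ω x = ∅ := hemp x fun h => hx ⟨h.1, h.2.le⟩
  simp [ωvol, this]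

lemma num1 {x s : ℝ} (hx : 0 < x) (hs : 0 < s) : x * (1 - s) / 2 < x := by
  nlinarith [mul_pos hx hs]

lemma num2 {x s : ℝ} (hx : 0 < x) (hs : s < 1) : x * s ≤ x - x * (1 - s) / 2 := by
  nlinarith [mul_pos hx (sub_pos.2 hs)]

lemma num3 {x s a r : ℝ} (hx : a / 2 ≤ x) (ha : 0 < a) (hs : 0 < s) (hr : 0 < r)
    (h : x * s ≤ x - r) : a / 2 * (s - r) ≤ x - r := by
  nlinarith [mul_pos ha hr, mul_le_mul_of_nonneg_right hx hs.le]

set_option maxHeartbeats 2000000 in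
/-- The truncated and recentered average `ū₁^⊥` keeps most of the `L²` mass:
`∫ ω (ū₁^⊥)² ≥ (1 - Cε) ∫ ω ū²`. -/
theorem truncated_average_keeps_mass
    (m : ℕ) (hm : 1 ≤ m) (c₀ C₀ : ℝ) (hc₀ : 0 < c₀) (hC₀ : 0 < C₀) :
    ∃ C > (0:ℝ), ∃ ε₀ > (0:ℝ),
    ∀ (ε : ℝ) (Ω : Set (EuclideanSpace ℝ (Fin (m+1))))
      (u : EuclideanSpace ℝ (Fin (m+1)) → ℝ) (lam L0 L1 : ℝ),
      0 < ε → ε < ε₀ →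
      IsOpen Ω → Convex ℝ Ω → Bornology.IsBounded Ω →
      -- smooth boundary
      (∃ F : EuclideanSpace ℝ (Fin (m+1)) → ℝ, ContDiff ℝ (⊤:ℕ∞) F ∧
        Ω = {p | F p < 0} ∧ frontier Ω = {p | F p = 0} ∧
        ∀ p ∈ frontier Ω, gradient F p ≠ 0) →
      -- Ω ⊆ (0,1) × B^{n-1}(ε)
      (∀ x y, mkPt m x y ∈ Ω →
        x ∈ Ioo (0:ℝ) 1 ∧ y ∈ Metric.ball (0 : EuclideanSpace ℝ (Fin m)) ε) →
      -- nonempty cross-sections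
      (∀ s ∈ Ioo (0:ℝ) 1, (cross Ω s).Nonempty) →
      -- u is a nonzero mean-zero smooth Neumann eigenfunction with eigenvalue lam
      ContDiffOn ℝ (⊤:ℕ∞) u (closure Ω) →
      (∃ p ∈ Ω, u p ≠ 0) →
      (∫ p in Ω, u p) = 0 →
      (∀ p ∈ Ω, lap u p = -(lam * u p)) →
      (∀ p ∈ frontier Ω, ∀ v, (∀ z ∈ Ω, ⟪v, z - p⟫ ≤ 0) → ⟪gradient u p, v⟫ = 0) →
      0 < lam →
      -- facts from [CJK2009], assumed as hypotheses
      (∀ p ∈ Ω, ‖gradient u p‖ ≤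
        C₀ * max (min (p 0) (1 - p 0)) ε * sSup ((fun q => |u q|) '' Ω)) →
      c₀ * sSup (u '' Ω) ≤ -sInf (u '' Ω) →
      -sInf (u '' Ω) ≤ C₀ * sSup (u '' Ω) →
      Tendsto (ubarFn Ω u) (𝓝[>] 0) (𝓝 L0) →
      (1 - C₀ * ε) * sSup (u '' Ω) ≤ L0 →
      Tendsto (ubarFn Ω u) (𝓝[<] 1) (𝓝 L1) →
      L1 ≤ (1 - C₀ * ε) * sInf (u '' Ω) →
      -- ū₁: truncation of ū; ū₁⁰: its ω-weighted mean; ū₁^⊥ = ū₁ - ū₁⁰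
      ∀ (ub1 : ℝ → ℝ) (ub10 : ℝ),
      (∀ x, ub1 x = if x < ε then ubarFn Ω u ε
        else if x ≤ 1 - ε then ubarFn Ω u x else ubarFn Ω u (1 - ε)) →
      ub10 = (∫ x in (0:ℝ)..1, ωvol Ω x * ub1 x) / (∫ x in (0:ℝ)..1, ωvol Ω x) →
      (1 - C * ε) * (∫ x in (0:ℝ)..1, ωvol Ω x * (ubarFn Ω u x) ^ 2)
        ≤ ∫ x in (0:ℝ)..1, ωvol Ω x * (ub1 x - ub10) ^ 2 := by
  classical
  obtain ⟨a, ha⟩ : ∃ a : ℝ, a = 1 / (4 * (1 + C₀)) := ⟨_, rfl⟩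
  have ha0 : 0 < a := by rw [ha]; positivity
  have haC : a * (1 + C₀) = 1 / 4 := by rw [ha]; field_simp
  have ha4 : a ≤ 1 / 4 := by nlinarith
  obtain ⟨κ, hκ⟩ : ∃ κ : ℝ, κ = (a / 2) ^ (m + 1) / (4 * (1 + C₀) ^ 2) := ⟨_, rfl⟩
  have hκ0 : 0 < κ := by rw [hκ]; positivity
  refine ⟨6 * C₀ / κ, by positivity, a, ha0, ?_⟩
  intro ε Ω u lam L0 L1 hε hεa hop hconv hbdd _ hsub hne hu hu0 hmean _ _ _ hg hM1 hM2 hL0 hL0' _ _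
    ub1 ub10 hub1 _
  have huc : ContinuousOn u (closure Ω) := hu.continuousOn
  have huΩ : ContinuousOn u Ω := huc.mono subset_closure
  have hcpt : IsCompact (closure Ω) := hbdd.isCompact_closure
  have hba : BddAbove (u '' Ω) := (hcpt.bddAbove_image huc).mono (image_mono subset_closure)
  have hbb : BddBelow (u '' Ω) := (hcpt.bddBelow_image huc).mono (image_mono subset_closure)
  have hbS : BddAbove ((fun q => |u q|) '' Ω) :=
    (hcpt.bddAbove_image huc.abs).mono (image_mono subset_closure)
  obtain ⟨M, hM⟩ : ∃ M, M = sSup (u '' Ω) := ⟨_, rfl⟩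
  obtain ⟨N, hN⟩ : ∃ N, N = sInf (u '' Ω) := ⟨_, rfl⟩
  obtain ⟨S, hS⟩ : ∃ S, S = sSup ((fun q => |u q|) '' Ω) := ⟨_, rfl⟩
  rw [← hS] at hg
  rw [← hM, ← hN] at hM1 hM2
  rw [← hM] at hL0'
  have huM : ∀ p ∈ Ω, u p ≤ M := fun p hp => hM ▸ le_csSup hba (mem_image_of_mem u hp)
  have huN : ∀ p ∈ Ω, N ≤ u p := fun p hp => hN ▸ csInf_le hbb (mem_image_of_mem u hp)
  have huS : ∀ p ∈ Ω, |u p| ≤ S := fun p hp =>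
    hS ▸ le_csSup hbS (mem_image_of_mem (fun q => |u q|) hp)
  obtain ⟨p0, hp0, hup0⟩ := hu0
  have hMpos : 0 < M := by
    by_contra hcon
    have h1 := huM p0 hp0
    have h2 := huN p0 hp0
    have h3 : C₀ * M ≤ 0 := by nlinarith
    exact hup0 (by linarith)
  have hSM : S ≤ (1 + C₀) * M := by
    rw [hS]
    refine csSup_le ⟨_, mem_image_of_mem _ hp0⟩ ?_
    rintro _ ⟨p, hp, rfl⟩
    have h1 := huM p hp
    have h2 := huN p hp
    have h3 : 0 < C₀ * M := by positivity
    refine abs_le.2 ⟨by linarith, by linarith⟩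
  have hS0 : 0 ≤ S := (abs_nonneg _).trans (huS p0 hp0)
  have hfin : ∀ x, volume (cross Ω x) ≠ ⊤ := fun x =>
    ((measure_mono (fun y hy => (hsub x y hy).2)).trans_lt Metric.isBounded_ball.measure_lt_top).ne
  have hemp : ∀ x, x ∉ Ioo (0:ℝ) 1 → cross Ω x = ∅ := fun x hx =>
    eq_empty_iff_forall_notMem.2 fun y hy => hx (hsub x y hy).1
  have hω0 : ∀ x, 0 ≤ ωvol Ω x := fun x => ENNReal.toReal_nonneg
  have hω0' : ∀ x, x ∉ Ioo (0:ℝ) 1 → ωvol Ω x = 0 := fun x hx => by simp [ωvol, hemp x hx]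
  obtain ⟨V, hV⟩ : ∃ V, V = (volume (Metric.ball (0 : EuclideanSpace ℝ (Fin m)) ε)).toReal :=
    ⟨_, rfl⟩
  have hωV : ∀ x, ωvol Ω x ≤ V := fun x => by
    rw [hV]
    exact ENNReal.toReal_mono Metric.isBounded_ball.measure_lt_top.ne
      (measure_mono (fun y hy => (hsub x y hy).2))
  have hV0 : 0 ≤ V := (hω0 0).trans (hωV 0)
  have hωm : Measurable (ωvol Ω) := omega_meas hop
  have hbm : Measurable (ubarFn Ω u) := ubar_meas hop huΩ
  have hbS' : ∀ x, |ubarFn Ω u x| ≤ S := by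
    intro x
    by_cases hx : x ∈ Ioo (0:ℝ) 1
    · rw [abs_le]
      exact avg_bd hop (hfin x) (hne x hx) huΩ (fun y hy => (abs_le.1 (huS _ hy)).1)
        (fun y hy => (abs_le.1 (huS _ hy)).2)
    · simp [ubarFn, hemp x hx, hS0]
  have h1m : Measurable ub1 := by
    have : ub1 = fun x => if x < ε then ubarFn Ω u ε
        else if x ≤ 1 - ε then ubarFn Ω u x else ubarFn Ω u (1 - ε) := funext hub1
    rw [this]
    exact Measurable.ite measurableSet_Iio measurable_const
      (Measurable.ite measurableSet_Iic hbm measurable_const)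
  have h1S : ∀ x, |ub1 x| ≤ S := by
    intro x; rw [hub1]; split_ifs <;> apply hbS'
  -- integrability of bounded measurable functions
  have hint : ∀ (f : ℝ → ℝ) (B : ℝ), Measurable f → (∀ x, |f x| ≤ B) →
      ∀ r s, IntervalIntegrable (fun x => ωvol Ω x * f x) volume r s := by
    intro f B hf hB r s
    rw [intervalIntegrable_iff]
    refine IntegrableOn.of_bound (C := V * B) (by simp) (hωm.mul hf).aestronglyMeasurable ?_
    refine Eventually.of_forall fun x => ?_
    rw [Real.norm_eq_abs, abs_mul, abs_of_nonneg (hω0 x)]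
    exact mul_le_mul (hωV x) (hB x) (abs_nonneg _) hV0
  have hintω : ∀ r s, IntervalIntegrable (fun x => ωvol Ω x) volume r s := fun r s => by
    simpa using hint (fun _ => 1) 1 measurable_const (by simp) r s
  have hint2 : ∀ r s, IntervalIntegrable (fun x => ωvol Ω x * (ubarFn Ω u x) ^ 2) volume r s :=
    hint _ (S ^ 2) (hbm.pow_const 2) fun x => by
      rw [abs_pow]; exact pow_le_pow_left₀ (abs_nonneg _) (hbS' x) 2
  have hint3 : ∀ r s, IntervalIntegrable (fun x => ωvol Ω x * (ub1 x - ub10) ^ 2) volume r s :=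
    hint _ ((S + |ub10|) ^ 2) ((h1m.sub_const _).pow_const 2) fun x => by
      rw [abs_pow]
      refine pow_le_pow_left₀ (abs_nonneg _) ((abs_sub _ _).trans ?_) 2
      linarith [h1S x]
  have hint1 : ∀ r s, IntervalIntegrable (fun x => ωvol Ω x * ubarFn Ω u x) volume r s :=
    hint _ S hbm hbS'
  -- the mean is zero
  have huint : IntegrableOn u Ω :=
    (huc.integrableOn_compact hcpt).mono_set subset_closure
  have hzero : ∫ x in (0:ℝ)..1, ωvol Ω x * ubarFn Ω u x = 0 := by
    rw [fub hop huint hfin hemp, hmean]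
  obtain ⟨W, hW⟩ : ∃ W, W = ∫ x in (0:ℝ)..1, ωvol Ω x := ⟨_, rfl⟩
  obtain ⟨E, hE⟩ : ∃ E, E = ∫ x in (0:ℝ)..1, ωvol Ω x * (ubarFn Ω u x) ^ 2 := ⟨_, rfl⟩
  have hW0 : 0 ≤ W := hW ▸ intervalIntegral.integral_nonneg zero_le_one fun x _ => hω0 x
  -- difference of averages
  have hdiff : ∀ (α β G : ℝ), 0 ≤ G → (∀ x ∈ Icc α β, max (min x (1 - x)) ε ≤ G) →
      ∀ x ∈ Icc α β, ∀ x' ∈ Icc α β, x ∈ Ioo (0:ℝ) 1 → x' ∈ Ioo (0:ℝ) 1 →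
      |ubarFn Ω u x - ubarFn Ω u x'| ≤ C₀ * G * S * (β - α + 2 * ε) := by
    intro α β G hG0 hG x hx x' hx' hx1 hx1'
    exact avg_diff hop (hfin x) (hne x hx1) (hfin x') (hne x' hx1') huΩ fun y hy y' hy' =>
      osc hop hconv hC₀ hS0 hsub hu hg hG0 hG hx hx' hy hy'
  -- closeness of the truncation
  have hclose : ∀ x ∈ Ioo (0:ℝ) 1, |ub1 x - ubarFn Ω u x| ≤ 3 * C₀ * ε ^ 2 * S := by
    intro x hx
    have hδ : 0 ≤ 3 * C₀ * ε ^ 2 * S := by positivity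
    rw [hub1]
    split_ifs with h1 h2
    · have := hdiff 0 ε ε hε.le
        (fun z hz => max_le ((min_le_left _ _).trans hz.2) le_rfl) ε ⟨hε.le, le_rfl⟩ x
        ⟨hx.1.le, h1.le⟩ ⟨hε, by linarith⟩ hx
      refine this.trans (le_of_eq (by ring))
    · simpa using hδ
    · push Not at h2
      have := hdiff (1 - ε) 1 ε hε.le
        (fun z hz => max_le ((min_le_right _ _).trans (by linarith [hz.1])) le_rfl)
        (1 - ε) ⟨le_rfl, by linarith⟩ x
        ⟨h2.le, hx.2.le⟩ ⟨by linarith, by linarith⟩ hx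
      refine this.trans (le_of_eq (by ring))
  -- lower bound near zero
  have hlow : ∀ x ∈ Ioc (0:ℝ) a, M / 2 ≤ ubarFn Ω u x := by
    intro x hx
    have hb : ∀ x' ∈ Ioc (0:ℝ) a, ubarFn Ω u x' ≤ ubarFn Ω u x + 3 / 16 * M := by
      intro x' hx'
      have := hdiff 0 a a ha0.le
        (fun z hz => max_le ((min_le_left _ _).trans hz.2) hεa.le) x' ⟨hx'.1.le, hx'.2⟩ x
        ⟨hx.1.le, hx.2⟩ ⟨hx'.1, by linarith [hx'.2]⟩ ⟨hx.1, by linarith [hx.2]⟩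
      have h2 := (abs_le.1 this).2
      have h3 : C₀ * a * S * (a - 0 + 2 * ε) ≤ 3 / 16 * M := by
        calc C₀ * a * S * (a - 0 + 2 * ε) ≤ (1 + C₀) * a * ((1 + C₀) * M) * (3 * a) := by
              gcongr
              · linarith
              · linarith
          _ = 3 * M * (a * (1 + C₀)) ^ 2 := by ring
          _ = 3 / 16 * M := by rw [haC]; ring
      linarith
    have hL : L0 ≤ ubarFn Ω u x + 3 / 16 * M := by
      refine le_of_tendsto hL0 ?_
      filter_upwards [Ioc_mem_nhdsGT ha0] with x' hx' using hb x' hx'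
    have : C₀ * ε ≤ 1 / 4 := by nlinarith
    nlinarith
  -- comparison of ω
  have hωc : ∀ x ∈ Icc (a / 2) a, ∀ s ∈ Ioo (0:ℝ) 1, (a / 2) ^ m * ωvol Ω s ≤ ωvol Ω x := by
    intro x hx s hs
    have hx0 : 0 < x := by linarith [hx.1]
    have key : ∀ t, a / 2 ≤ t → t * ωvol Ω s = t * ωvol Ω s → (t ^ m * ωvol Ω s ≤ ωvol Ω x) →
        (a / 2) ^ m * ωvol Ω s ≤ ωvol Ω x := by
      intro t ht _ h
      refine le_trans ?_ h
      have := hω0 s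
      gcongr
    rcases le_total s x with hsx | hsx
    · -- move toward the right end
      have hd : 0 < (1 + a) / 2 + 1 / 4 - s := by linarith [hx.2]
      obtain ⟨r, hr⟩ : ∃ r : ℝ, r = (1 + a) / 2 + 1 / 4 := ⟨_, rfl⟩
      rw [← hr] at hd
      have hxa := hx.2
      refine key ((r - x) / (r - s)) ?_ rfl ?_
      · rw [le_div_iff₀ hd]
        have := hs.1
        nlinarith
      · refine cross_scale hconv (x' := r) (hfin x)
          (div_nonneg (by linarith) hd.le) ((div_le_one hd).2 (by linarith)) ?_
          (hne r ⟨by linarith, by linarith⟩)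
        field_simp
        ring
    · -- move toward the left end
      obtain ⟨r, hr⟩ : ∃ r : ℝ, r = x * (1 - s) / 2 := ⟨_, rfl⟩
      have hs1 : 0 < 1 - s := by linarith [hs.2]
      have hr0 : 0 < r := by rw [hr]; positivity
      have hrx : r < x := by rw [hr]; exact num1 hx0 hs.1
      have hd : 0 < s - r := by linarith
      refine key ((x - r) / (s - r)) ?_ rfl ?_
      · rw [le_div_iff₀ hd]
        have h1 := hx.1
        have h2 := hs.1
        have h3 : x * s ≤ x - r := by rw [hr]; exact num2 hx0 hs.2
        exact num3 h1 ha0 h2 hr0 h3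
      · refine cross_scale hconv (x' := r) (hfin x)
          (div_nonneg (by linarith) hd.le) ((div_le_one hd).2 (by linarith)) ?_
          (hne r ⟨by linarith, by linarith [hx.2]⟩)
        field_simp
        ring
  have hωW : ∀ x ∈ Icc (a / 2) a, (a / 2) ^ m * W ≤ ωvol Ω x := by
    intro x hx
    have : ∫ s in (0:ℝ)..1, (a / 2) ^ m * ωvol Ω s ≤ ∫ s in (0:ℝ)..1, ωvol Ω x := by
      refine intervalIntegral.integral_mono_on zero_le_one ((hintω 0 1).const_mul _)
        intervalIntegrable_const fun s _ => ?_
      by_cases hs : s ∈ Ioo (0:ℝ) 1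
      · exact hωc x hx s hs
      · rw [hω0' s hs, mul_zero]; exact hω0 x
    rw [intervalIntegral.integral_const_mul, ← hW] at this
    simpa using this
  have hE1 : κ * S ^ 2 * W ≤ E := by
    have h1 : ∫ x in (a/2)..a, (a / 2) ^ m * W * (M / 2) ^ 2 ≤
        ∫ x in (a/2)..a, ωvol Ω x * (ubarFn Ω u x) ^ 2 := by
      refine intervalIntegral.integral_mono_on (by linarith) intervalIntegrable_const
        (hint2 _ _) fun x hx => ?_
      have h2 := hlow x ⟨by linarith [hx.1], hx.2⟩
      have h3 := hω0 x
      have h4 := hωW x hx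
      gcongr
    have h2 : ∫ x in (a/2)..a, ωvol Ω x * (ubarFn Ω u x) ^ 2 ≤ E := by
      rw [hE]
      refine intervalIntegral.integral_mono_interval (by linarith) (by linarith) (by linarith)
        ?_ (hint2 _ _)
      exact Eventually.of_forall fun x => mul_nonneg (hω0 x) (sq_nonneg _)
    refine le_trans ?_ (h1.trans h2)
    rw [intervalIntegral.integral_const, smul_eq_mul]
    calc κ * S ^ 2 * W ≤ κ * ((1 + C₀) * M) ^ 2 * W := by gcongr
      _ = (a - a / 2) * ((a / 2) ^ m * W * (M / 2) ^ 2) := by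
        rw [hκ]; field_simp; ring
  -- conclusion
  have hmain : ∫ x in (0:ℝ)..1, (ωvol Ω x * (ubarFn Ω u x) ^ 2
      - 2 * ub10 * (ωvol Ω x * ubarFn Ω u x) - 6 * C₀ * ε ^ 2 * S ^ 2 * ωvol Ω x) ≤
      ∫ x in (0:ℝ)..1, ωvol Ω x * (ub1 x - ub10) ^ 2 := by
    refine intervalIntegral.integral_mono_on zero_le_one
      (((hint2 0 1).sub ((hint1 0 1).const_mul _)).sub ((hintω 0 1).const_mul _))
      (hint3 0 1) fun x _ => ?_
    by_cases hx : x ∈ Ioo (0:ℝ) 1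
    · obtain ⟨e, he⟩ : ∃ e, e = ub1 x - ubarFn Ω u x := ⟨_, rfl⟩
      have h1 := hclose x hx
      rw [← he] at h1
      have h2 : |ubarFn Ω u x * e| ≤ S * (3 * C₀ * ε ^ 2 * S) := by
        rw [abs_mul]
        exact mul_le_mul (hbS' x) h1 (abs_nonneg _) hS0
      have h3 := (abs_le.1 h2).1
      have h4 : ub1 x = ubarFn Ω u x + e := by rw [he]; ring
      rw [h4]
      have h5 := mul_nonneg (hω0 x) (sq_nonneg (e - ub10))
      have h6 := mul_le_mul_of_nonneg_left h3 (hω0 x)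
      nlinarith
    · simp [hω0' x hx]
  rw [intervalIntegral.integral_sub ((hint2 0 1).sub ((hint1 0 1).const_mul _))
      ((hintω 0 1).const_mul _),
    intervalIntegral.integral_sub (hint2 0 1) ((hint1 0 1).const_mul _),
    intervalIntegral.integral_const_mul, intervalIntegral.integral_const_mul, hzero,
    ← hW, ← hE] at hmain
  rw [← hE]
  refine le_trans ?_ hmain
  have h1 : 6 * C₀ * ε ^ 2 * S ^ 2 * W ≤ 6 * C₀ / κ * ε * E := by
    calc 6 * C₀ * ε ^ 2 * S ^ 2 * W = 6 * C₀ / κ * ε * (ε * (κ * S ^ 2 * W)) := by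
          field_simp
      _ ≤ 6 * C₀ / κ * ε * (1 * E) := by
          gcongr
          linarith
      _ = _ := by ring
  linarith
end
end
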